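/- Suppose for each i = 1,…,m the functions f_{i,1},…,f_{i,n} : ℝ^d → ℝ are differentiable and L-average smooth, and set f_i = (1/n)Σ_{j=1}^n f_{i,j}. Let η > 0, p ∈ (0,1], b ≥ 1, and let x, x⁺, g, s ∈ ℝ^{m×d}. Define U = ‖(1/m)Σ_{i=1}^m (g(i) − ∇f_i(x(i)))‖² and C = ‖x − 𝟙x̄ᵀ‖² + η²‖s − 𝟙s̄ᵀ‖², and assume the consensus bound ‖x⁺ − 𝟙(x̄⁺)ᵀ‖² ≤ 2C. Then, averaging over all maps ξ : {1,…,m}×{1,…,b} → {1,…,n} (independent uniform mini-batches on every agent), (1−p)·n^{−mb} Σ_{ξ} ‖(1/m)Σ_{i=1}^m [g(i) + (1/b)Σ_{k=1}^b (∇f_{i,ξ(i,k)}(x⁺(i)) − ∇f_{i,ξ(i,k)}(x(i))) − ∇f_i(x⁺(i))]‖² ≤ (1−p)[U + (9L²/(m²b)) C + (3L²/(mb))‖x̄⁺ − x̄‖²]. -/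

import Mathlib

open scoped BigOperators

noncomputable section

/-- Frobenius norm of a matrix represented by its rows (Euclidean norm for vectors). -/
def fnorm {m : ℕ} {E : Type} [NormedAddCommGroup E] (u : Fin m → E) : ℝ :=
  Real.sqrt (∑ i, ‖u i‖ ^ 2)

/-- Average of the rows of a matrix: `ū = (1/m) 𝟙ᵀ u`. -/
def rowAvg {m : ℕ} {E : Type} [AddCommGroup E] [Module ℝ E] (u : Fin m → E) : E :=
  (m : ℝ)⁻¹ • ∑ i, u i

/-- Action of the gossip matrix `W` on the rows of `u`. -/
def gossipMul {m : ℕ} (W : Fin m → Fin m → ℝ) {E : Type} [AddCommGroup E] [Module ℝ E]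
    (u : Fin m → E) : Fin m → E :=
  fun i => ∑ j, W i j • u j

/-- The pair `(u^(k), u^(k-1))` of the Chebyshev-accelerated gossip recursion
`u^(k+1) = (1+η_u) W u^(k) - η_u u^(k-1)` with
`η_u = (1 - √(1-λ₂²))/(1 + √(1-λ₂²))`. -/
def fastMixPair {m : ℕ} (W : Fin m → Fin m → ℝ) (lam : ℝ) {E : Type} [AddCommGroup E]
    [Module ℝ E] (u0 : Fin m → E) : ℕ → (Fin m → E) × (Fin m → E)
  | 0 => (u0, u0)
  | K + 1 =>
      let p := fastMixPair W lam u0 K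
      let etau := (1 - Real.sqrt (1 - lam ^ 2)) / (1 + Real.sqrt (1 - lam ^ 2))
      ((1 + etau) • gossipMul W p.1 - etau • p.2, p.1)

/-- `FastMix(u⁰, K) = u^(K)`. -/
def fastMix {m : ℕ} (W : Fin m → Fin m → ℝ) (lam : ℝ) {E : Type} [AddCommGroup E]
    [Module ℝ E] (u0 : Fin m → E) (K : ℕ) : Fin m → E :=
  (fastMixPair W lam u0 K).1

theorem aux_sq_sum {E : Type} [NormedAddCommGroup E] [InnerProductSpace ℝ E] (n : ℕ) (hn : 1 ≤ n)
    (N : ℕ) : ∀ (A : E) (Y : Fin N → Fin n → E) (_ : ∀ a, ∑ j, Y a j = 0),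
    ∑ ξ : Fin N → Fin n, ‖A + ∑ a, Y a (ξ a)‖ ^ 2
      = (n : ℝ) ^ N * (‖A‖ ^ 2 + (n : ℝ)⁻¹ * ∑ a, ∑ j, ‖Y a j‖ ^ 2) := by
  have hn0 : (n : ℝ) ≠ 0 := by positivity
  induction N with
  | zero => intro A Y hY; simp
  | succ N ih =>
    intro A Y hY
    rw [← (Fin.consEquiv (fun _ : Fin (N + 1) => Fin n)).sum_comp, Fintype.sum_prod_type]
    have h1 : ∀ j : Fin n, ∑ ξ : Fin N → Fin n,
        ‖A + ∑ a, Y a ((Fin.consEquiv (fun _ : Fin (N + 1) => Fin n)) (j, ξ) a)‖ ^ 2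
        = (n : ℝ) ^ N * (‖A + Y 0 j‖ ^ 2 + (n : ℝ)⁻¹ * ∑ a : Fin N, ∑ j, ‖Y a.succ j‖ ^ 2) := by
      intro j
      rw [← ih (A + Y 0 j) (fun a => Y a.succ) (fun a => hY _)]
      refine Finset.sum_congr rfl fun ξ _ => ?_
      rw [Fin.sum_univ_succ, add_assoc]
      simp [Fin.consEquiv]
    rw [Finset.sum_congr rfl fun j _ => h1 j]
    have h2 : ∑ j, ‖A + Y 0 j‖ ^ 2 = n * ‖A‖ ^ 2 + ∑ j, ‖Y 0 j‖ ^ 2 := by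
      simp only [norm_add_sq_real, Finset.sum_add_distrib, ← Finset.mul_sum, ← inner_sum, hY]
      simp
    rw [← Finset.mul_sum, Finset.sum_add_distrib, h2, Fin.sum_univ_succ]
    simp only [Finset.sum_const, Finset.card_univ, Fintype.card_fin, nsmul_eq_mul]
    field_simp
    ring

theorem aux_var {E : Type} [NormedAddCommGroup E] [InnerProductSpace ℝ E] (n : ℕ) (hn : 1 ≤ n)
    (D : Fin n → E) :
    ∑ j, ‖D j - (n : ℝ)⁻¹ • ∑ k, D k‖ ^ 2 ≤ ∑ j, ‖D j‖ ^ 2 := by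
  have hn0 : (n : ℝ) ≠ 0 := by positivity
  set μ := (n : ℝ)⁻¹ • ∑ k, D k with hμ
  have h : ∑ k, D k = (n : ℝ) • μ := by rw [hμ, smul_inv_smul₀ hn0]
  simp only [norm_sub_sq_real, Finset.sum_add_distrib, Finset.sum_sub_distrib, ← Finset.mul_sum,
    ← sum_inner, h]
  simp only [real_inner_smul_left, real_inner_self_eq_norm_sq, Finset.sum_const, Finset.card_univ,
    Fintype.card_fin, nsmul_eq_mul]
  have : 0 ≤ (n : ℝ) * ‖μ‖ ^ 2 := by positivity
  linarith

theorem aux_grad (d n : ℕ) (f : Fin n → EuclideanSpace ℝ (Fin d) → ℝ)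
    (hdiff : ∀ j, Differentiable ℝ (f j)) (F : EuclideanSpace ℝ (Fin d) → ℝ)
    (hF : ∀ x, F x = (n : ℝ)⁻¹ * ∑ j, f j x) (x : EuclideanSpace ℝ (Fin d)) :
    gradient F x = (n : ℝ)⁻¹ • ∑ j, gradient (f j) x := by
  have h : HasFDerivAt F ((n : ℝ)⁻¹ • ∑ j, fderiv ℝ (f j) x) x := by
    have : F = fun x => (n : ℝ)⁻¹ * ∑ j, f j x := funext hF
    rw [this]
    exact (HasFDerivAt.fun_sum fun j _ => (hdiff j x).hasFDerivAt).const_mul _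
  unfold gradient
  rw [h.fderiv]
  simp

theorem aux_fnorm {m : ℕ} {E : Type} [NormedAddCommGroup E] (u : Fin m → E) :
    fnorm u ^ 2 = ∑ i, ‖u i‖ ^ 2 := by
  unfold fnorm
  exact Real.sq_sqrt (by positivity)

theorem aux_three {E : Type} [NormedAddCommGroup E] (a b c : E) :
    ‖a + b - c‖ ^ 2 ≤ 3 * (‖a‖ ^ 2 + ‖b‖ ^ 2 + ‖c‖ ^ 2) := by
  have h : ‖a + b - c‖ ≤ ‖a‖ + ‖b‖ + ‖c‖ :=
    (norm_sub_le _ _).trans (by linarith [norm_add_le a b])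
  have := norm_nonneg (a + b - c)
  nlinarith [sq_nonneg (‖a‖ - ‖b‖), sq_nonneg (‖a‖ - ‖c‖), sq_nonneg (‖b‖ - ‖c‖)]

theorem statement12 (m n d b : ℕ) (hm : 1 ≤ m) (hn : 1 ≤ n) (hb : 1 ≤ b)
    (L η p : ℝ) (hη : 0 < η) (hp0 : 0 < p) (hp1 : p ≤ 1)
    (f : Fin m → Fin n → EuclideanSpace ℝ (Fin d) → ℝ)
    (hdiff : ∀ i j, Differentiable ℝ (f i j))
    (havg : ∀ i, ∀ x x' : EuclideanSpace ℝ (Fin d),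
      (n : ℝ)⁻¹ * ∑ j, ‖gradient (f i j) x - gradient (f i j) x'‖ ^ 2 ≤ L ^ 2 * ‖x - x'‖ ^ 2)
    (fi : Fin m → EuclideanSpace ℝ (Fin d) → ℝ)
    (hfi : ∀ i x, fi i x = (n : ℝ)⁻¹ * ∑ j, f i j x)
    (x xp g s : Fin m → EuclideanSpace ℝ (Fin d))
    (hcons : fnorm (xp - fun _ => rowAvg xp) ^ 2 ≤
      2 * (fnorm (x - fun _ => rowAvg x) ^ 2 + η ^ 2 * fnorm (s - fun _ => rowAvg s) ^ 2)) :
    (1 - p) * (((n : ℝ) ^ (m * b))⁻¹ * ∑ ξ : Fin m → Fin b → Fin n,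
        ‖(m : ℝ)⁻¹ • ∑ i, (g i
            + (b : ℝ)⁻¹ • (∑ k, (gradient (f i (ξ i k)) (xp i) - gradient (f i (ξ i k)) (x i)))
            - gradient (fi i) (xp i))‖ ^ 2)
      ≤ (1 - p) * (‖(m : ℝ)⁻¹ • ∑ i, (g i - gradient (fi i) (x i))‖ ^ 2
          + (9 * L ^ 2 / ((m : ℝ) ^ 2 * (b : ℝ))) *
              (fnorm (x - fun _ => rowAvg x) ^ 2 + η ^ 2 * fnorm (s - fun _ => rowAvg s) ^ 2)
          + (3 * L ^ 2 / ((m : ℝ) * (b : ℝ))) * ‖rowAvg xp - rowAvg x‖ ^ 2) := by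
  have hn0 : (n : ℝ) ≠ 0 := by positivity
  have hm0 : (0 : ℝ) < m := by positivity
  have hb0 : (0 : ℝ) < b := by positivity
  refine mul_le_mul_of_nonneg_left ?_ (by linarith)
  set D : Fin m → Fin n → EuclideanSpace ℝ (Fin d) :=
    fun i j => gradient (f i j) (xp i) - gradient (f i j) (x i) with hD
  set μ : Fin m → EuclideanSpace ℝ (Fin d) := fun i => (n : ℝ)⁻¹ • ∑ j, D i j with hμ
  have hgrad : ∀ i, gradient (fi i) (xp i) = gradient (fi i) (x i) + μ i := by
    intro i
    rw [aux_grad d n (f i) (hdiff i) (fi i) (hfi i), aux_grad d n (f i) (hdiff i) (fi i) (hfi i)]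
    simp only [hμ, hD, Finset.sum_sub_distrib, smul_sub]
    abel
  set A := (m : ℝ)⁻¹ • ∑ i, (g i - gradient (fi i) (x i)) with hA
  set c : ℝ := (m : ℝ)⁻¹ * (b : ℝ)⁻¹ with hc
  set Y : Fin (m * b) → Fin n → EuclideanSpace ℝ (Fin d) :=
    fun a j => c • (D (finProdFinEquiv.symm a).1 j - μ (finProdFinEquiv.symm a).1) with hY
  have hY0 : ∀ a, ∑ j, Y a j = 0 := by
    intro a
    simp only [hY, ← Finset.smul_sum, Finset.sum_sub_distrib, Finset.sum_const, Finset.card_univ,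
      Fintype.card_fin, hμ, ← Nat.cast_smul_eq_nsmul ℝ, inv_smul_smul₀ hn0, sub_self, smul_zero]
  have hterm : ∀ ξ : Fin m → Fin b → Fin n,
      (m : ℝ)⁻¹ • ∑ i, (g i
            + (b : ℝ)⁻¹ • (∑ k, (gradient (f i (ξ i k)) (xp i) - gradient (f i (ξ i k)) (x i)))
            - gradient (fi i) (xp i))
      = A + ∑ a, Y a (ξ (finProdFinEquiv.symm a).1 (finProdFinEquiv.symm a).2) := by
    intro ξ
    rw [← (finProdFinEquiv (m := m) (n := b)).sum_comp, Fintype.sum_prod_type]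
    simp only [hY, Equiv.symm_apply_apply, ← Finset.smul_sum]
    rw [hA, hc, mul_smul, ← smul_add, Finset.smul_sum (r := (b : ℝ)⁻¹), ← Finset.sum_add_distrib]
    congr 1
    refine Finset.sum_congr rfl fun i _ => ?_
    rw [hgrad, Finset.sum_sub_distrib (fun k => D i (ξ i k)), Finset.sum_const, Finset.card_univ,
      Fintype.card_fin, ← Nat.cast_smul_eq_nsmul ℝ, smul_sub, inv_smul_smul₀ hb0.ne']
    abel
  let e : (Fin m → Fin b → Fin n) ≃ (Fin (m * b) → Fin n) :=
    (Equiv.curry (Fin m) (Fin b) (Fin n)).symm.trans (finProdFinEquiv.arrowCongr (Equiv.refl _))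
  have hsum : ∑ ξ : Fin m → Fin b → Fin n,
        ‖(m : ℝ)⁻¹ • ∑ i, (g i
            + (b : ℝ)⁻¹ • (∑ k, (gradient (f i (ξ i k)) (xp i) - gradient (f i (ξ i k)) (x i)))
            - gradient (fi i) (xp i))‖ ^ 2
      = (n : ℝ) ^ (m * b) * (‖A‖ ^ 2 + (n : ℝ)⁻¹ * ∑ a, ∑ j, ‖Y a j‖ ^ 2) := by
    rw [← aux_sq_sum n hn (m * b) A Y hY0, ← e.sum_comp]
    refine Finset.sum_congr rfl fun ξ _ => ?_
    rw [hterm]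
    rfl
  rw [hsum, inv_mul_cancel_left₀ (pow_ne_zero _ hn0)]
  have hvar : (n : ℝ)⁻¹ * ∑ a, ∑ j, ‖Y a j‖ ^ 2
      ≤ c ^ 2 * b * (L ^ 2 * ∑ i, ‖xp i - x i‖ ^ 2) := by
    rw [← (finProdFinEquiv (m := m) (n := b)).sum_comp, Fintype.sum_prod_type]
    simp only [hY, Equiv.symm_apply_apply, norm_smul, mul_pow, ← Finset.mul_sum, Finset.sum_const,
      Finset.card_univ, Fintype.card_fin, nsmul_eq_mul, Real.norm_eq_abs, sq_abs]
    have : ∀ i, (n : ℝ)⁻¹ * ∑ j, ‖D i j - μ i‖ ^ 2 ≤ L ^ 2 * ‖xp i - x i‖ ^ 2 := fun i =>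
      (mul_le_mul_of_nonneg_left (aux_var n hn (D i)) (by positivity)).trans (havg i _ _)
    calc _ = c ^ 2 * b * ∑ i, (n : ℝ)⁻¹ * ∑ j, ‖D i j - μ i‖ ^ 2 := by
            rw [← Finset.mul_sum]; ring
      _ ≤ c ^ 2 * b * ∑ i, L ^ 2 * ‖xp i - x i‖ ^ 2 := by
            exact mul_le_mul_of_nonneg_left (Finset.sum_le_sum fun i _ => this i) (by positivity)
      _ = _ := by rw [← Finset.mul_sum]
  have hdist : ∑ i, ‖xp i - x i‖ ^ 2 ≤ 9 *
      (fnorm (x - fun _ => rowAvg x) ^ 2 + η ^ 2 * fnorm (s - fun _ => rowAvg s) ^ 2)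
      + 3 * m * ‖rowAvg xp - rowAvg x‖ ^ 2 := by
    have h1 : ∑ i, ‖xp i - x i‖ ^ 2 ≤ ∑ i, 3 * (‖xp i - rowAvg xp‖ ^ 2
        + ‖rowAvg xp - rowAvg x‖ ^ 2 + ‖x i - rowAvg x‖ ^ 2) := by
      refine Finset.sum_le_sum fun i _ => ?_
      have := aux_three (xp i - rowAvg xp) (rowAvg xp - rowAvg x) (x i - rowAvg x)
      have h0 : xp i - rowAvg xp + (rowAvg xp - rowAvg x) - (x i - rowAvg x) = xp i - x i := by
        abel
      rwa [h0] at this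
    rw [← Finset.mul_sum, Finset.sum_add_distrib, Finset.sum_add_distrib] at h1
    have h2 := aux_fnorm (xp - fun _ => rowAvg xp)
    have h3 := aux_fnorm (x - fun _ => rowAvg x)
    simp only [Pi.sub_apply] at h2 h3
    rw [← h2, ← h3] at h1
    simp only [Finset.sum_const, Finset.card_univ, Fintype.card_fin, nsmul_eq_mul] at h1
    have h4 : 0 ≤ η ^ 2 * fnorm (s - fun _ => rowAvg s) ^ 2 := by positivity
    linarith
  have hfin := hvar.trans (mul_le_mul_of_nonneg_left
    (mul_le_mul_of_nonneg_left hdist (sq_nonneg L)) (by positivity : 0 ≤ c ^ 2 * b))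
  rw [add_assoc]
  refine add_le_add_right (hfin.trans (le_of_eq ?_)) _
  rw [hc]
  field_simp
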